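/- There is no element x of the ℤ×ℤ-graded algebra D = A ⊗ A, where A is the ℤ-graded *-algebra generated by α, α*, β̃, β̃* with relations α*α + β̃*β̃ = 1, αα* + q²ⁿ' β̃β̃* = 1 (for the appropriate deformation parameter), αβ̃ = q̃β̃α, αβ̃* = q̃β̃*α, β̃*β̃ = β̃β̃* (with deg α = 0, deg β̃ = 1), such that xⁿ = β̃ⁿ ⊗ α + α* ⊗ β̃ⁿ, for n ≥ 2. -/

import Mathlib

/-!
The elements `α^k β̃^m β̃*^{m'}` and `α*^k β̃^m β̃*^{m'}` are indexed by `ℤ × ℕ × ℕ`, the sign of the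
first entry telling `α` from `α*`.  With the lexicographic order, the algebra `A` has multiplicative
lowest terms: the product of the basis elements at `i` and `j` is a nonzero multiple of the basis
element at `i + j` plus a combination of strictly larger ones, because `α α*` and `α* α` equal `1`
up to a multiple of `β̃ β̃*`.  This is checked on the generators (`QRel.shifts_*`) and passes to
products (`Shifts.mul`) and to `A ⊗ A` with the lexicographic product order (`Shifts.tmul`).

Hence if the lowest term of `x` sits at `v`, that of `xⁿ` sits at `n • v` (`IsLead.pow`).  The lowest
term of `β̃ⁿ ⊗ α + α* ⊗ β̃ⁿ` is `α* ⊗ β̃ⁿ`, whose first coordinate is `-1`, and this is not divisible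
by `n ≥ 2`.  So the only degree needed is the one counting `α`, in the first tensor factor.
-/

open TensorProduct

/-! ### Lowest terms with respect to an ordered family -/

section LeadingTerms

variable {Γ R : Type} [LinearOrder Γ] [Ring R] [Algebra ℂ R] {b : Γ → R}

/-- The span of the members of the family `b` with index strictly above `g`. -/
def Above (b : Γ → R) (g : Γ) : Submodule ℂ R := Submodule.span ℂ (b '' Set.Ioi g)

/-- The lowest term of `x` with respect to `b` is a nonzero multiple of `b g`. -/
def IsLead (b : Γ → R) (x : R) (g : Γ) : Prop := ∃ c : ℂ, c ≠ 0 ∧ x - c • b g ∈ Above b g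

theorem apply_mem_above {g h : Γ} (hgh : g < h) : b h ∈ Above b g :=
  Submodule.subset_span ⟨h, hgh, rfl⟩

theorem above_anti {g h : Γ} (hgh : g ≤ h) : Above b h ≤ Above b g :=
  Submodule.span_mono (Set.image_mono (Set.Ioi_subset_Ioi hgh))

theorem IsLead.mem_above {x : R} {g h : Γ} (hx : IsLead b x h) (hgh : g < h) :
    x ∈ Above b g := by
  obtain ⟨c, -, hc⟩ := hx
  have := (Above b g).add_mem (above_anti hgh.le hc)
    ((Above b g).smul_mem c (apply_mem_above hgh))
  simpa using this

theorem IsLead.add {x y : R} {g : Γ} (hx : IsLead b x g) (hy : y ∈ Above b g) :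
    IsLead b (x + y) g := by
  obtain ⟨c, c0, hc⟩ := hx
  refine ⟨c, c0, ?_⟩
  have := (Above b g).add_mem hc hy
  rwa [sub_add_eq_add_sub] at this

theorem IsLead.smul {x : R} {g : Γ} (hx : IsLead b x g) {s : ℂ} (hs : s ≠ 0) :
    IsLead b (s • x) g := by
  obtain ⟨c, c0, hc⟩ := hx
  refine ⟨s * c, mul_ne_zero hs c0, ?_⟩
  have := (Above b g).smul_mem s hc
  rwa [smul_sub, smul_smul] at this

theorem isLead_self (g : Γ) : IsLead b (b g) g :=
  ⟨1, one_ne_zero, by simp⟩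

/-- For a basis, being the index of the lowest term is a condition on the coordinates alone. -/
theorem Basis.isLead_iff (b : Module.Basis Γ ℂ R) {x : R} {g : Γ} :
    IsLead b x g ↔ b.repr x g ≠ 0 ∧ ∀ h < g, b.repr x h = 0 := by
  have hab : ∀ z, z ∈ Above b g ↔ ∀ h ≤ g, b.repr z h = 0 := fun z => by
    rw [Above, Module.Basis.mem_span_image]
    simp only [Set.subset_def, Finset.mem_coe, Finsupp.mem_support_iff, Set.mem_Ioi]
    exact forall_congr' fun h => by rw [← not_le, not_imp_not]
  constructor
  · rintro ⟨c, c0, hc⟩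
    rw [hab] at hc
    refine ⟨?_, fun h hh => ?_⟩
    · have := hc g le_rfl
      simp [sub_eq_zero] at this
      rwa [this]
    · have := hc h hh.le
      simpa [Finsupp.single_apply, hh.ne'] using this
  · rintro ⟨h0, hlt⟩
    refine ⟨b.repr x g, h0, (hab _).2 fun h hh => ?_⟩
    rcases hh.eq_or_lt with rfl | hh
    · simp
    · simp [hh.ne', hlt h hh]

theorem Basis.exists_isLead (b : Module.Basis Γ ℂ R) {x : R} (hx : x ≠ 0) :
    ∃ g, IsLead b x g := by
  have hne : (b.repr x).support.Nonempty := by simpa using hx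
  refine ⟨(b.repr x).support.min' hne, (Basis.isLead_iff b).2 ⟨?_, fun h hh => ?_⟩⟩
  · exact Finsupp.mem_support_iff.1 (Finset.min'_mem _ hne)
  · by_contra h0
    exact (Finset.min'_le _ h (Finsupp.mem_support_iff.2 h0)).not_gt hh

theorem Basis.isLead_unique (b : Module.Basis Γ ℂ R) {x : R} {g h : Γ}
    (hg : IsLead b x g) (hh : IsLead b x h) : g = h := by
  rw [Basis.isLead_iff] at hg hh
  rcases lt_trichotomy g h with hlt | rfl | hlt
  · exact absurd (hh.2 g hlt) hg.1
  · rfl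
  · exact absurd (hg.2 h hlt) hh.1

/-- The family of pure tensors `b g ⊗ b h`, indexed by the lexicographic square of `Γ`. -/
def tensorFamily (b : Γ → R) (p : Γ ×ₗ Γ) : R ⊗[ℂ] R := b (ofLex p).1 ⊗ₜ b (ofLex p).2

theorem IsLead.tmul (hspan : Submodule.span ℂ (Set.range b) = ⊤) {x y : R} {g h : Γ}
    (hx : IsLead b x g) (hy : IsLead b y h) :
    IsLead (tensorFamily b) (x ⊗ₜ[ℂ] y) (toLex (g, h)) := by
  obtain ⟨c, c0, hc⟩ := hx
  obtain ⟨d, d0, hd⟩ := hy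
  have key1 : ∀ z ∈ Above b h, b g ⊗ₜ[ℂ] z ∈ Above (tensorFamily b) (toLex (g, h)) :=
    fun z hz => by
      induction hz using Submodule.span_induction with
      | mem z hz =>
        obtain ⟨k, hk, rfl⟩ := hz
        exact apply_mem_above (b := tensorFamily b) (h := toLex (g, k))
          (Prod.Lex.toLex_lt_toLex.2 (Or.inr ⟨rfl, hk⟩))
      | zero => simp
      | add y z _ _ hy hz => rw [TensorProduct.tmul_add]; exact add_mem hy hz
      | smul a z _ hz => rw [TensorProduct.tmul_smul]; exact Submodule.smul_mem _ _ hz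
  have key2 : ∀ k, g < k → ∀ y, b k ⊗ₜ[ℂ] y ∈ Above (tensorFamily b) (toLex (g, h)) :=
    fun k hk y => by
      have hy : y ∈ Submodule.span ℂ (Set.range b) := hspan ▸ Submodule.mem_top
      induction hy using Submodule.span_induction with
      | mem z hz =>
        obtain ⟨l, rfl⟩ := hz
        exact apply_mem_above (b := tensorFamily b) (h := toLex (k, l))
          (Prod.Lex.toLex_lt_toLex.2 (Or.inl hk))
      | zero => simp
      | add y z _ _ hy hz => rw [TensorProduct.tmul_add]; exact add_mem hy hz
      | smul a z _ hz => rw [TensorProduct.tmul_smul]; exact Submodule.smul_mem _ _ hz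
  have key3 : ∀ z ∈ Above b g, z ⊗ₜ[ℂ] y ∈ Above (tensorFamily b) (toLex (g, h)) :=
    fun z hz => by
      induction hz using Submodule.span_induction with
      | mem z hz =>
        obtain ⟨k, hk, rfl⟩ := hz
        exact key2 k hk y
      | zero => simp
      | add y z _ _ hy hz => rw [TensorProduct.add_tmul]; exact add_mem hy hz
      | smul a z _ hz => rw [← TensorProduct.smul_tmul']; exact Submodule.smul_mem _ _ hz
  refine ⟨c * d, mul_ne_zero c0 d0, ?_⟩
  have := add_mem (Submodule.smul_mem _ c (key1 _ hd)) (key3 _ hc)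
  convert this using 1
  simp only [tensorFamily, ofLex_toLex, TensorProduct.tmul_sub, TensorProduct.sub_tmul,
    TensorProduct.tmul_smul, ← TensorProduct.smul_tmul', smul_sub, smul_smul]
  abel

variable [AddCommMonoid Γ]

/-- Left multiplication by `x` moves the lowest term of each member of `b` by exactly `d`. -/
def Shifts (b : Γ → R) (x : R) (d : Γ) : Prop := ∀ g, IsLead b (x * b g) (d + g)

theorem Shifts.tmul (hspan : Submodule.span ℂ (Set.range b) = ⊤) {x y : R} {d e : Γ}
    (hx : Shifts b x d) (hy : Shifts b y e) :
    Shifts (tensorFamily b) (x ⊗ₜ[ℂ] y) (toLex (d, e)) := fun p => by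
  have := (hx (ofLex p).1).tmul hspan (hy (ofLex p).2)
  rwa [← Algebra.TensorProduct.tmul_mul_tmul] at this

variable [IsOrderedCancelAddMonoid Γ]

theorem Shifts.mul_mem_above {x z : R} {d g : Γ} (hx : Shifts b x d) (hz : z ∈ Above b g) :
    x * z ∈ Above b (d + g) := by
  induction hz using Submodule.span_induction with
  | mem z hz =>
    obtain ⟨h, hh, rfl⟩ := hz
    exact (hx h).mem_above (add_lt_add_right hh d)
  | zero => simp
  | add y z _ _ hy hz => rw [mul_add]; exact add_mem hy hz
  | smul a z _ hz => rw [mul_smul_comm]; exact Submodule.smul_mem _ _ hz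

theorem Shifts.isLead {x y : R} {d g : Γ} (hx : Shifts b x d) (hy : IsLead b y g) :
    IsLead b (x * y) (d + g) := by
  obtain ⟨c, c0, hc⟩ := hy
  have := ((hx g).smul c0).add (hx.mul_mem_above hc)
  rwa [← mul_smul_comm, ← mul_add, add_sub_cancel] at this

theorem Shifts.mul {x y : R} {d e : Γ} (hx : Shifts b x d) (hy : Shifts b y e) :
    Shifts b (x * y) (d + e) := fun g => by
  rw [mul_assoc, add_assoc]
  exact hx.isLead (hy g)

theorem Shifts.pow {x : R} {d : Γ} (hx : Shifts b x d) (n : ℕ) :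
    Shifts b (x ^ n) (n • d) := by
  induction n with
  | zero => intro g; simpa using isLead_self g
  | succ n ih => rw [pow_succ, succ_nsmul]; exact ih.mul hx

/-- If every basis element shifts by its own index, indices of lowest terms add up in products. -/
theorem IsLead.mul (hb : ∀ g, Shifts b (b g) g) {x y : R} {g h : Γ}
    (hx : IsLead b x g) (hy : IsLead b y h) : IsLead b (x * y) (g + h) := by
  obtain ⟨c, c0, hc⟩ := hx
  have key : ∀ z ∈ Above b g, z * y ∈ Above b (g + h) := fun z hz => by
    induction hz using Submodule.span_induction with
    | mem z hz =>
      obtain ⟨k, hk, rfl⟩ := hz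
      exact ((hb k).isLead hy).mem_above (add_lt_add_left hk h)
    | zero => simp
    | add y z _ _ hy hz => rw [add_mul]; exact add_mem hy hz
    | smul a z _ hz => rw [smul_mul_assoc]; exact Submodule.smul_mem _ _ hz
  have := (((hb g).isLead hy).smul c0).add (key _ hc)
  rwa [← smul_mul_assoc, ← add_mul, add_sub_cancel] at this

theorem IsLead.pow (hb : ∀ g, Shifts b (b g) g) {x : R} {g : Γ} (hx : IsLead b x g) (n : ℕ) :
    IsLead b (x ^ (n + 1)) ((n + 1) • g) := by
  induction n with
  | zero => simpa using hx
  | succ n ih => rw [pow_succ, succ_nsmul]; exact ih.mul hb hx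

end LeadingTerms

/-! ### The monomials of quantum `SU(2)` -/

section Monomials

variable {A : Type} [Ring A]

/-- The index set of the monomial basis, ordered lexicographically. -/
abbrev Idx : Type := ℤ ×ₗ (ℕ ×ₗ ℕ)

/-- The index of the monomial with exponents `k`, `m`, `m'`. -/
def idx (k : ℤ) (m m' : ℕ) : Idx := toLex (k, toLex (m, m'))

theorem idx_add (k l : ℤ) (m m' p p' : ℕ) :
    idx k m m' + idx l p p' = idx (k + l) (m + p) (m' + p') := rfl

theorem nsmul_idx (n : ℕ) (k : ℤ) (m m' : ℕ) :
    n • idx k m m' = idx (n * k) (n * m) (n * m') := by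
  induction n with
  | zero => simp; rfl
  | succ n ih =>
    rw [succ_nsmul, ih, idx_add]
    congr 1
    · push_cast; ring
    · ring
    · ring

theorem idx_lt (k : ℤ) (m m' : ℕ) : idx k m m' < idx k (m + 1) (m' + 1) :=
  Prod.Lex.toLex_lt_toLex.2
    (Or.inr ⟨rfl, Prod.Lex.toLex_lt_toLex.2 (Or.inl (Nat.lt_succ_self m))⟩)

/-- The power `a ^ k`, with `a' ^ (-k)` in its place for negative `k`. -/
def sgnPow (a a' : A) (k : ℤ) : A := a ^ k.toNat * a' ^ (-k).toNat

theorem sgnPow_nat (a a' : A) (k : ℕ) : sgnPow a a' k = a ^ k := by simp [sgnPow]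

theorem sgnPow_neg (a a' : A) (k : ℕ) : sgnPow a a' (-k) = a' ^ k := by simp [sgnPow]

/-- The monomial with given index. -/
def mono (a a' b b' : A) (g : Idx) : A :=
  sgnPow a a' (ofLex g).1 * b ^ (ofLex (ofLex g).2).1 * b' ^ (ofLex (ofLex g).2).2

theorem mono_idx (a a' b b' : A) (k : ℤ) (m m' : ℕ) :
    mono a a' b b' (idx k m m') = sgnPow a a' k * b ^ m * b' ^ m' := rfl

variable [Algebra ℂ A]

/-- The quantum `SU(2)` relations with deformation parameter `l`; `a'` and `b'` stand for the
adjoints of `a` and `b`. -/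
structure QRel (l : ℂ) (a a' b b' : A) : Prop where
  ne : l ≠ 0
  aa : a' * a = 1 - b * b'
  aa' : a * a' = 1 - l ^ 2 • (b * b')
  ba : b * a = l⁻¹ • (a * b)
  b'a : b' * a = l⁻¹ • (a * b')
  ba' : b * a' = l • (a' * b)
  b'a' : b' * a' = l • (a' * b')
  comm : Commute b b'

theorem mul_pow_of_qcomm {x y : A} {t : ℂ} (h : x * y = t • (y * x)) (j : ℕ) :
    x * y ^ j = t ^ j • (y ^ j * x) := by
  induction j with
  | zero => simp
  | succ j ih =>
    rw [pow_succ, ← mul_assoc, ih, smul_mul_assoc, mul_assoc, h, mul_smul_comm, smul_smul,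
      ← pow_succ, mul_assoc]

theorem mul_qcomm {x x' y : A} {t t' : ℂ} (h : x * y = t • (y * x)) (h' : x' * y = t' • (y * x')) :
    (x * x') * y = (t' * t) • (y * (x * x')) := by
  rw [mul_assoc, h', mul_smul_comm, ← mul_assoc, h, smul_mul_assoc, smul_smul, mul_assoc]

theorem mul_sgnPow {x a a' : A} {t t' : ℂ} (ht : t ≠ 0) (ht' : t' ≠ 0)
    (h : x * a = t • (a * x)) (h' : x * a' = t' • (a' * x)) (k : ℤ) :
    ∃ s : ℂ, s ≠ 0 ∧ x * sgnPow a a' k = s • (sgnPow a a' k * x) := by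
  refine ⟨t ^ k.toNat * t' ^ (-k).toNat, mul_ne_zero (pow_ne_zero _ ht) (pow_ne_zero _ ht'), ?_⟩
  rw [sgnPow, ← mul_assoc, mul_pow_of_qcomm h, smul_mul_assoc, mul_assoc, mul_pow_of_qcomm h',
    mul_smul_comm, smul_smul, mul_assoc]

namespace QRel

variable {l : ℂ} {a a' b b' : A}

theorem a_mul (H : QRel l a a' b b') (k : ℤ) : ∃ s : ℂ,
    a * sgnPow a a' k = sgnPow a a' (k + 1) - s • (sgnPow a a' (k + 1) * (b * b')) := by
  obtain ⟨j, rfl | rfl⟩ := k.eq_nat_or_neg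
  · refine ⟨0, ?_⟩
    rw [sgnPow_nat, ← Nat.cast_succ, sgnPow_nat, pow_succ']
    simp
  · cases j with
    | zero => exact ⟨0, by simp [sgnPow]⟩
    | succ j =>
      have hk : -((j + 1 : ℕ) : ℤ) + 1 = -(j : ℤ) := by push_cast; ring
      refine ⟨l ^ 2 * (l * l) ^ j, ?_⟩
      rw [hk, sgnPow_neg, sgnPow_neg, pow_succ', ← mul_assoc, H.aa', sub_mul, one_mul,
        smul_mul_assoc, mul_pow_of_qcomm (mul_qcomm H.ba' H.b'a'), smul_smul]

theorem a'_mul (H : QRel l a a' b b') (k : ℤ) : ∃ s : ℂ,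
    a' * sgnPow a a' k = sgnPow a a' (-1 + k) - s • (sgnPow a a' (-1 + k) * (b * b')) := by
  obtain ⟨j, rfl | rfl⟩ := k.eq_nat_or_neg
  · cases j with
    | zero => exact ⟨0, by simp [sgnPow]⟩
    | succ j =>
      have hk : -1 + ((j + 1 : ℕ) : ℤ) = (j : ℤ) := by push_cast; ring
      refine ⟨(l⁻¹ * l⁻¹) ^ j, ?_⟩
      rw [hk, sgnPow_nat, sgnPow_nat, pow_succ', ← mul_assoc, H.aa, sub_mul, one_mul,
        mul_pow_of_qcomm (mul_qcomm H.ba H.b'a)]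
  · have hk : -1 + -(j : ℤ) = -((j + 1 : ℕ) : ℤ) := by push_cast; ring
    refine ⟨0, ?_⟩
    rw [hk, sgnPow_neg, sgnPow_neg, pow_succ']
    simp

/-- An element that raises the exponent of `a` by `d`, up to a multiple of `b * b'`, shifts the
monomials by `d` in the first coordinate: multiplying a monomial by `b * b'` makes it larger. -/
theorem shifts_of_mul (H : QRel l a a' b b') {x : A} {d : ℤ}
    (hx : ∀ k, ∃ s : ℂ, x * sgnPow a a' k =
      sgnPow a a' (d + k) - s • (sgnPow a a' (d + k) * (b * b'))) :
    Shifts (mono a a' b b') x (idx d 0 0) := by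
  intro g
  obtain ⟨k, m, m', rfl⟩ : ∃ k m m', g = idx k m m' := ⟨_, _, _, rfl⟩
  obtain ⟨s, hs⟩ := hx k
  have hmono : x * mono a a' b b' (idx k m m') = mono a a' b b' (idx (d + k) m m') +
      (-s) • mono a a' b b' (idx (d + k) (m + 1) (m' + 1)) := by
    have hc : b * b' * (b ^ m * b' ^ m') = b ^ (m + 1) * b' ^ (m' + 1) := by
      rw [pow_succ' b, pow_succ' b', mul_assoc, ← mul_assoc b', ← (H.comm.pow_left m).eq]
      simp only [mul_assoc]
    rw [mono_idx, mono_idx, mono_idx, mul_assoc, mul_assoc, mul_assoc, ← hc, ← mul_assoc, hs,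
      sub_mul, neg_smul, sub_eq_add_neg, smul_mul_assoc, mul_assoc (sgnPow a a' (d + k)) (b * b')]
  rw [hmono, idx_add, zero_add, zero_add]
  exact (isLead_self _).add (Submodule.smul_mem _ _ (apply_mem_above (idx_lt _ _ _)))

theorem shifts_a (H : QRel l a a' b b') : Shifts (mono a a' b b') a (idx 1 0 0) :=
  H.shifts_of_mul fun k => by rw [add_comm]; exact H.a_mul k

theorem shifts_a' (H : QRel l a a' b b') : Shifts (mono a a' b b') a' (idx (-1) 0 0) :=
  H.shifts_of_mul H.a'_mul

theorem shifts_b (H : QRel l a a' b b') : Shifts (mono a a' b b') b (idx 0 1 0) := by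
  intro g
  obtain ⟨k, m, m', rfl⟩ : ∃ k m m', g = idx k m m' := ⟨_, _, _, rfl⟩
  obtain ⟨s, s0, hs⟩ := mul_sgnPow (inv_ne_zero H.ne) H.ne H.ba H.ba' k
  have : b * mono a a' b b' (idx k m m') = s • mono a a' b b' (idx 0 1 0 + idx k m m') := by
    rw [idx_add, zero_add, zero_add, mono_idx, mono_idx, ← mul_assoc, ← mul_assoc, hs, add_comm 1,
      pow_succ', smul_mul_assoc, smul_mul_assoc]
    simp only [mul_assoc]
  rw [this]
  exact (isLead_self _).smul s0

theorem shifts_b' (H : QRel l a a' b b') : Shifts (mono a a' b b') b' (idx 0 0 1) := by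
  intro g
  obtain ⟨k, m, m', rfl⟩ : ∃ k m m', g = idx k m m' := ⟨_, _, _, rfl⟩
  obtain ⟨s, s0, hs⟩ := mul_sgnPow (inv_ne_zero H.ne) H.ne H.b'a H.b'a' k
  have : b' * mono a a' b b' (idx k m m') = s • mono a a' b b' (idx 0 0 1 + idx k m m') := by
    rw [idx_add, zero_add, zero_add, mono_idx, mono_idx, ← mul_assoc, ← mul_assoc, hs, add_comm 1,
      pow_succ', smul_mul_assoc, smul_mul_assoc, mul_assoc _ b', ← (H.comm.pow_left m).eq]
    simp only [mul_assoc]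
  rw [this]
  exact (isLead_self _).smul s0

theorem shifts_mono (H : QRel l a a' b b') (g : Idx) :
    Shifts (mono a a' b b') (mono a a' b b' g) g := by
  obtain ⟨k, m, m', rfl⟩ : ∃ k m m', g = idx k m m' := ⟨_, _, _, rfl⟩
  have hk : Shifts (mono a a' b b') (sgnPow a a' k) (idx k 0 0) := by
    obtain ⟨j, rfl | rfl⟩ := k.eq_nat_or_neg
    · have := H.shifts_a.pow j
      rw [nsmul_idx] at this
      simpa [sgnPow_nat] using this
    · have := H.shifts_a'.pow j
      rw [nsmul_idx] at this
      simpa [sgnPow_neg] using this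
  have := (hk.mul (H.shifts_b.pow m)).mul (H.shifts_b'.pow m')
  rw [nsmul_idx, nsmul_idx, idx_add, idx_add] at this
  simpa [mono_idx] using this

end QRel

/-- Splitting the index set by the sign of its first coordinate; `Sum.inr (k, m, m')` stands for
the exponent `-(k + 1)`. -/
def idxEquiv : Idx ≃ (ℕ × ℕ × ℕ) ⊕ (ℕ × ℕ × ℕ) where
  toFun g := match g with
    | (Int.ofNat k, m) => Sum.inl (k, m)
    | (Int.negSucc k, m) => Sum.inr (k, m)
  invFun := Sum.elim (fun i => idx i.1 i.2.1 i.2.2) (fun i => idx (Int.negSucc i.1) i.2.1 i.2.2)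
  left_inv := by rintro ⟨_ | _, _, _⟩ <;> rfl
  right_inv := by rintro (⟨_, _, _⟩ | ⟨_, _, _⟩) <;> rfl

end Monomials

/-! ### The comultiplication does not lift -/

/-- The counterexample: let `A` be the ℤ-graded polynomial *-algebra of `SU_{q̃}(2)`
(`q̃ = q^{1/n}`), generated by `α, β̃` with the Woronowicz relations, graded with
`deg α = 0`, `deg β̃ = 1`, and with the monomials `α^k β̃^m β̃*^{m'}`,
`α*^{k'} β̃^m β̃*^{m'}` (`k' ≥ 1`) forming a basis.  Then there is no element `x` of the
`ℤ×ℤ`-graded algebra `D = A ⊗ A` such that `xⁿ = β̃ⁿ ⊗ α + α* ⊗ β̃ⁿ` (for `n ≥ 2`):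
the comultiplication of `SU_q(2)` does not lift to the covering algebra. -/
theorem no_lift_of_comultiplication
    (q : ℝ) (hq0 : 0 < q) (hq1 : q < 1) (n : ℕ) (hn : 2 ≤ n)
    (A : Type) [Ring A] [Algebra ℂ A] [StarRing A] [StarModule ℂ A]
    (α β' : A)
    -- the SU_{q̃}(2) relations, with q̃ = q^{1/n}
    (h₁ : star α * α + star β' * β' = 1)
    (h₂ : α * star α + (((q ^ ((n : ℝ)⁻¹)) ^ 2 : ℝ) : ℂ) • (β' * star β') = 1)
    (h₃ : α * β' = ((q ^ ((n : ℝ)⁻¹) : ℝ) : ℂ) • (β' * α))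
    (h₄ : α * star β' = ((q ^ ((n : ℝ)⁻¹) : ℝ) : ℂ) • (star β' * α))
    (h₅ : star β' * β' = β' * star β')
    -- the ℤ-grading coming from the U(1)-action, with deg α = 0, deg β̃ = 1
    (𝒜 : ℤ → Submodule ℂ A) [GradedRing 𝒜]
    (hαdeg : α ∈ 𝒜 0) (hαstardeg : star α ∈ 𝒜 0)
    (hβdeg : β' ∈ 𝒜 1) (hβstardeg : star β' ∈ 𝒜 (-1))
    -- the monomials α^k β̃^m β̃*^{m'} and α*^{k'} β̃^m β̃*^{m'} (k' ≥ 1) form a basis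
    (hindep : LinearIndependent ℂ (fun i : (ℕ × ℕ × ℕ) ⊕ (ℕ × ℕ × ℕ) =>
      match i with
      | Sum.inl (k, m, m') => α ^ k * β' ^ m * (star β') ^ m'
      | Sum.inr (k', m, m') => (star α) ^ (k' + 1) * β' ^ m * (star β') ^ m'))
    (hspan : Submodule.span ℂ (Set.range (fun i : (ℕ × ℕ × ℕ) ⊕ (ℕ × ℕ × ℕ) =>
      match i with
      | Sum.inl (k, m, m') => α ^ k * β' ^ m * (star β') ^ m'
      | Sum.inr (k', m, m') => (star α) ^ (k' + 1) * β' ^ m * (star β') ^ m')) = ⊤) :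
    ¬ ∃ x : A ⊗[ℂ] A, x ^ n = (β' ^ n) ⊗ₜ[ℂ] α + (star α) ⊗ₜ[ℂ] (β' ^ n) := by
  rintro ⟨x, hx⟩
  set l : ℝ := q ^ ((n : ℝ)⁻¹) with hl
  have l0 : (l : ℂ) ≠ 0 := by exact_mod_cast (Real.rpow_pos_of_pos hq0 _).ne'
  have H : QRel (l : ℂ) α (star α) β' (star β') :=
    { ne := l0
      aa := by rw [← h₅]; exact eq_sub_of_add_eq h₁
      aa' := by push_cast at h₂; exact eq_sub_of_add_eq h₂
      ba := by rw [h₃, smul_smul, inv_mul_cancel₀ l0, one_smul]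
      b'a := by rw [h₄, smul_smul, inv_mul_cancel₀ l0, one_smul]
      ba' := by simpa using congrArg star h₄
      b'a' := by simpa using congrArg star h₃
      comm := h₅.symm }
  set e := mono α (star α) β' (star β') with he
  have hcomp : (fun i : (ℕ × ℕ × ℕ) ⊕ (ℕ × ℕ × ℕ) =>
      match i with
      | Sum.inl (k, m, m') => α ^ k * β' ^ m * (star β') ^ m'
      | Sum.inr (k', m, m') => (star α) ^ (k' + 1) * β' ^ m * (star β') ^ m') ∘ idxEquiv = e := by
    rw [← Equiv.eq_comp_symm]
    funext i
    rcases i with ⟨k, m, m'⟩ | ⟨k, m, m'⟩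
    · exact congrArg (· * β' ^ m * (star β') ^ m') (sgnPow_nat α (star α) k).symm
    · exact congrArg (· * β' ^ m * (star β') ^ m') (sgnPow_neg α (star α) (k + 1)).symm
  have hli : LinearIndependent ℂ e := by
    rw [← hcomp]; exact hindep.comp _ idxEquiv.injective
  have hsp : Submodule.span ℂ (Set.range e) = ⊤ := by
    rw [← hcomp, idxEquiv.surjective.range_comp]; exact hspan
  let B := Module.Basis.mk hli hsp.ge
  let T : Module.Basis (Idx ×ₗ Idx) ℂ (A ⊗[ℂ] A) := (B.tensorProduct B).reindex toLex
  have hT : ⇑T = tensorFamily e := by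
    funext p
    simp only [T, B, Module.Basis.reindex_apply, tensorFamily]
    erw [Module.Basis.tensorProduct_apply]
    simp
    rfl
  have hmul : ∀ p, Shifts T (T p) p := fun p => by
    rw [hT]
    exact (H.shifts_mono _).tmul hsp (H.shifts_mono _)
  have e1 : star α ⊗ₜ[ℂ] (β' ^ n) = T (toLex (idx (-1) 0 0, idx 0 n 0)) := by
    simp [hT, tensorFamily, he, mono_idx, sgnPow]
  have e2 : (β' ^ n) ⊗ₜ[ℂ] α = T (toLex (idx 0 n 0, idx 1 0 0)) := by
    simp [hT, tensorFamily, he, mono_idx, sgnPow]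
  have hlead : IsLead T (x ^ n) (toLex (idx (-1) 0 0, idx 0 n 0)) := by
    rw [hx, add_comm, e1, e2]
    refine (isLead_self _).add (apply_mem_above (Prod.Lex.toLex_lt_toLex.2 (Or.inl ?_)))
    exact Prod.Lex.toLex_lt_toLex.2 (Or.inl (by norm_num))
  obtain ⟨N, rfl⟩ : ∃ N, n = N + 1 := ⟨n - 1, by omega⟩
  have x0 : x ≠ 0 := by
    rintro rfl
    rw [zero_pow (Nat.succ_ne_zero N), Basis.isLead_iff] at hlead
    simp at hlead
  -- Compare exponents of `α` in the first tensor factor: `n` times an integer would be `-1`.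
  obtain ⟨v, hv⟩ := Basis.exists_isLead T x0
  have hv' := Basis.isLead_unique T (hv.pow hmul N) hlead
  have hfst : (N + 1) • (ofLex (ofLex v).1).1 = (-1 : ℤ) :=
    congrArg (fun p : Idx ×ₗ Idx => (ofLex (ofLex p).1).1) hv'
  rw [nsmul_eq_mul] at hfst
  have hdvd : ((N + 1 : ℕ) : ℤ) ∣ 1 := by
    rw [← dvd_neg]; exact ⟨_, hfst.symm⟩
  have := Int.le_of_dvd one_pos hdvd
  omega
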